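/- arXiv:1610.09706 — 2 statements merged into one kernel-verified Lean document; each statement's English description precedes it below -/
import Mathlib

section
/- W(F) is flat as a module over A_inf = W(R). -/
/-!
Flatness is tested through the localization `V` of `W(R)` at the Witt vectors whose zeroth
coefficient is nonzero, that is, at the complement of the prime ideal `(p)`.
Since `R` is perfect, every nonzero element of `W(R)` is `p ^ n * u` with `u.coeff 0 ≠ 0`, so every
nonzero element of `V` is a power of `p` up to a unit (`exists_associated_pow_p`), and `V` is a
valuation ring.
The elements inverted in `V` become units in `W(F)`, because their zeroth coefficient is a nonzero
element of the field `F`; hence `W(F)` is a `V`-algebra, and it is torsion-free because it is a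
domain into which `V` injects. A torsion-free module over a valuation ring is flat, `V` is flat
over `W(R)`, and flatness is transitive.
-/


/-!
Context: `R = lim O_{K̄}/(p)` (inverse limit along `x ↦ x^p`) is a perfect valuation
ring (in particular a domain) of characteristic `p`, with fraction field `F = Frac R`;
`A_inf = W(R)` and `W(F)` are the rings of `p`-typical Witt vectors, with
`W(R) ⊆ W(F)` via `R ⊆ F`.  We axiomatize `R` by its structural properties.
-/

variable (p : ℕ) [Fact p.Prime] (R : Type*) [CommRing R] [IsDomain R]
  [ValuationRing R] [CharP R p] [PerfectRing R p]

/-- `W(F)` is an algebra over `A_inf = W(R)` via the Witt-vector functoriality applied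
to `R → F = Frac R`. -/
noncomputable instance wittFractionAlgebra :
    Algebra (WittVector p R) (WittVector p (FractionRing R)) :=
  (WittVector.map (algebraMap R (FractionRing R))).toAlgebra

/-- The Witt vectors over a domain `A` with nonzero zeroth coefficient. In characteristic `p` with
`A` perfect, this is the complement of the prime ideal generated by `p`. -/
noncomputable def wittPrimeCompl (p : ℕ) [Fact p.Prime] (A : Type*) [CommRing A] [IsDomain A] :
    Submonoid (WittVector p A) :=
  (nonZeroDivisors A).comap (WittVector.constantCoeff : WittVector p A →+* A)

section

variable {q : ℕ} [Fact q.Prime] {A : Type*} [CommRing A] [IsDomain A]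

theorem mem_wittPrimeCompl {x : WittVector q A} : x ∈ wittPrimeCompl q A ↔ x.coeff 0 ≠ 0 := by
  simp [wittPrimeCompl, mem_nonZeroDivisors_iff_ne_zero, WittVector.constantCoeff_apply]

theorem wittPrimeCompl_le [CharP A q] :
    wittPrimeCompl q A ≤ nonZeroDivisors (WittVector q A) := by
  intro x hx
  rw [mem_nonZeroDivisors_iff_ne_zero]
  rintro rfl
  exact mem_wittPrimeCompl.1 hx (WittVector.zero_coeff q A 0)

theorem isUnit_map_of_mem_wittPrimeCompl {L : Type*} [Field L] [CharP L q] {f : A →+* L}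
    (hf : Function.Injective f) {x : WittVector q A} (hx : x ∈ wittPrimeCompl q A) :
    IsUnit (WittVector.map f x) := by
  apply WittVector.isUnit_of_coeff_zero_ne_zero
  rw [WittVector.map_coeff]
  exact (map_ne_zero_iff f hf).2 (mem_wittPrimeCompl.1 hx)

/-- In the localization of `W(A)` at `(p)`, with `A` perfect, `p` is a uniformizer. -/
theorem exists_associated_pow_p [CharP A q] [PerfectRing A q]
    {x : Localization (wittPrimeCompl q A)} (hx : x ≠ 0) :
    ∃ n : ℕ, Associated ((q : Localization (wittPrimeCompl q A)) ^ n) x := by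
  obtain ⟨a, s, rfl⟩ := IsLocalization.exists_mk'_eq (wittPrimeCompl q A) x
  have ha : a ≠ 0 := by
    rintro rfl
    exact hx (IsLocalization.mk'_zero s)
  obtain ⟨n, b, hb, rfl⟩ := WittVector.exists_eq_pow_p_mul a ha
  have hu := IsLocalization.map_units (Localization (wittPrimeCompl q A))
    (⟨b, mem_wittPrimeCompl.2 hb⟩ : wittPrimeCompl q A)
  have hs := IsLocalization.map_units (Localization (wittPrimeCompl q A)) s
  refine ⟨n, (associated_mul_unit_right _ _ hu).trans
    ((associated_mul_unit_left _ _ hs).symm.trans ?_).symm⟩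
  rw [IsLocalization.mk'_spec]
  simp

theorem valuationRing_localization_wittPrimeCompl [CharP A q] [PerfectRing A q]
    [IsDomain (Localization (wittPrimeCompl q A))] :
    ValuationRing (Localization (wittPrimeCompl q A)) := by
  refine ValuationRing.iff_dvd_total.2 ⟨fun x y => ?_⟩
  rcases eq_or_ne x 0 with rfl | hx
  · exact Or.inr (dvd_zero y)
  rcases eq_or_ne y 0 with rfl | hy
  · exact Or.inl (dvd_zero x)
  obtain ⟨m, hm⟩ := exists_associated_pow_p hx
  obtain ⟨n, hn⟩ := exists_associated_pow_p hy
  rw [← hm.dvd_iff_dvd_left, ← hn.dvd_iff_dvd_right, ← hn.dvd_iff_dvd_left,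
    ← hm.dvd_iff_dvd_right]
  exact (le_total m n).imp (pow_dvd_pow _) (pow_dvd_pow _)

end

/-- **Statement 16** (Lemma 5.8 (1)).  `W(F)` is flat as a module over
`A_inf = W(R)`. -/
theorem statement16 :
    Module.Flat (WittVector p R) (WittVector p (FractionRing R)) := by
  have hinj : Function.Injective (algebraMap R (FractionRing R)) :=
    IsFractionRing.injective R (FractionRing R)
  have : CharP (FractionRing R) p := charP_of_injective_algebraMap hinj p
  let V := Localization (wittPrimeCompl p R)
  have : IsDomain V := IsLocalization.isDomain_localization wittPrimeCompl_le
  have : ValuationRing V := valuationRing_localization_wittPrimeCompl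
  have hunit (s : wittPrimeCompl p R) :
      IsUnit (algebraMap (WittVector p R) (WittVector p (FractionRing R)) s) :=
    isUnit_map_of_mem_wittPrimeCompl hinj s.2
  let φ : V →+* WittVector p (FractionRing R) := IsLocalization.lift hunit
  have hφ : Function.Injective φ := by
    rw [IsLocalization.lift_injective_iff]
    intro x y
    rw [(IsLocalization.injective V wittPrimeCompl_le).eq_iff]
    exact (WittVector.map_injective _ hinj).eq_iff.symm
  algebraize_only [φ]
  have : IsScalarTower (WittVector p R) V (WittVector p (FractionRing R)) :=
    IsScalarTower.of_algebraMap_eq' (IsLocalization.lift_comp hunit).symm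
  have : Module.Flat (WittVector p R) V := IsLocalization.flat V (wittPrimeCompl p R)
  have : Module.Flat V (WittVector p (FractionRing R)) := by
    rw [Module.Flat.flat_iff_torsion_eq_bot_of_isBezout,
      ← Submodule.isTorsionFree_iff_torsion_eq_bot]
    exact Module.isTorsionFree_iff_algebraMap_injective.2 hφ
  exact Module.Flat.trans (WittVector p R) V (WittVector p (FractionRing R))
end

section
/- Let f : M → M' be a homomorphism of A_inf-modules such that M is finite free over A_inf, M' is u-torsion-free (multiplication by u = [π̲₀] is injective on M'), and N := ker(f) is a finitely generated A_inf-module. Then N is a finite free A_inf-module. -/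
/-!
Write `A = W(R)`, `u = [ϖ]`, `N = ker f`.  Only two facts about `N` are used: it is finitely
generated, and it is `u`-saturated in `M` (if `u z ∈ N` then `z ∈ N`).  Take generators
`v_1, …, v_m` of `N` with `m` minimal; the claim is that they are linearly independent.

The valuation ring `R` may have rank greater than one, so it need not be `ϖ`-adically separated.
The ideal `P = ⋂ ϖ^k R` is prime (`infDvd_isPrime`), so `D = W(R/P)` is a domain.

* Since `ϖ` and `p` form a regular sequence on the free module `M`, saturation and minimality
  force every relation `∑ a_i v_i = 0` to have `a_i mod p ∈ P`: otherwise dividing by the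
  coefficient of least valuation would express one `v_j` through the others
  (`relation_coeff_zero`).
* Saturation upgrades this: if `∑ a_i v_i ∈ u^k M` for all `k`, then `a_i mod p ∈ P`, and dividing
  by `p` successively, `a_i ∈ W(P)` (`coeff_mem_of_dvd`).  As `W(P) ⊆ ⋂ u^k A`, this says that the
  coordinate matrix `G` of `v` is injective over `D`.
* A matrix over `A` that is injective over the quotient domain `D` is injective over `A`: there are
  `H` and `d ≠ 0` with `G H = d` over `D`, so a lift of `G H` has nonzero determinant
  (`vecMul_injective_of_map`).
-/

/-! ### Infinitely divisible elements of the valuation ring -/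

/-- The ideal `⋂ ϖ^k R` of elements divisible by every power of `ϖ`. -/
def infDvd {R : Type*} [CommRing R] (ϖ : R) : Ideal R where
  carrier := {r | ∀ k : ℕ, ϖ ^ k ∣ r}
  zero_mem' := fun _ => dvd_zero _
  add_mem' := fun ha hb k => dvd_add (ha k) (hb k)
  smul_mem' := fun c _ ha k => (ha k).mul_left c

lemma mem_infDvd {R : Type*} [CommRing R] {ϖ r : R} : r ∈ infDvd ϖ ↔ ∀ k : ℕ, ϖ ^ k ∣ r := Iff.rfl

lemma infDvd_isPrime {R : Type*} [CommRing R] [IsDomain R] [ValuationRing R] {ϖ : R}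
    (hϖ : ϖ ≠ 0) (hu : ¬ IsUnit ϖ) : (infDvd ϖ).IsPrime := by
  refine ⟨fun h => hu ?_, fun {a b} hab => ?_⟩
  · have h1 : (1 : R) ∈ infDvd ϖ := h ▸ Submodule.mem_top
    exact isUnit_of_dvd_one (by simpa using mem_infDvd.1 h1 1)
  · by_contra! h
    obtain ⟨ha, hb⟩ := h
    simp only [mem_infDvd, not_forall] at ha hb
    obtain ⟨k, hk⟩ := ha
    obtain ⟨l, hl⟩ := hb
    have h1 := (ValuationRing.dvd_total (ϖ ^ k) a).resolve_left hk
    have h2 := (ValuationRing.dvd_total (ϖ ^ l) b).resolve_left hl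
    have h3 : ϖ ^ (k + l) * ϖ ∣ ϖ ^ (k + l) * 1 := by
      rw [← pow_succ, mul_one]
      refine (mem_infDvd.1 hab (k + l + 1)).trans ?_
      rw [pow_add]
      exact mul_dvd_mul h1 h2
    exact hu (isUnit_of_dvd_one ((mul_dvd_mul_iff_left (pow_ne_zero _ hϖ)).1 h3))

/-! ### Lifting injectivity of matrices -/

/-- Injectivity of a matrix lifts along a surjection of domains: if `φ : A → D` is such a
surjection and `G` is injective (on row vectors) modulo `ker φ`, then `G` is injective.
Over `Frac D` the matrix has a one-sided inverse; clearing denominators gives `H`, `d ≠ 0` over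
`D` with `φ(G) H = d`, and a lift of `H` makes `det (G H)` nonzero. -/
lemma vecMul_injective_of_map {A D : Type*} [CommRing A] [IsDomain A] [CommRing D] [IsDomain D]
    (φ : A →+* D) (hφ : Function.Surjective φ) {ι κ : Type*} [Fintype ι] [Fintype κ]
    (G : Matrix ι κ A) (h : ∀ d : ι → D, Matrix.vecMul d (G.map φ) = 0 → d = 0)
    (a : ι → A) (ha : Matrix.vecMul a G = 0) : a = 0 := by
  classical
  let K := FractionRing D
  let GK : Matrix ι κ K := (G.map φ).map (algebraMap D K)
  have hD : LinearIndependent D GK.row := by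
    rw [Fintype.linearIndependent_iff]
    intro d hd
    refine congrFun (h d ?_)
    ext c
    apply IsFractionRing.injective D K
    have := congrFun hd c
    simpa [Matrix.vecMul, dotProduct, GK, Algebra.smul_def] using this
  have hK : LinearIndependent K GK.row := (LinearIndependent.iff_fractionRing D K).1 hD
  have hinj := Matrix.vecMul_injective_iff.2 hK
  obtain ⟨g, hg⟩ := GK.vecMulLinear.exists_leftInverse_of_injective
    (LinearMap.ker_eq_bot.2 hinj)
  obtain ⟨d, hd⟩ := IsLocalization.exist_integer_multiples_of_finite (nonZeroDivisors D)
    (fun x : κ × ι => g (Pi.single x.1 1) x.2)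
  choose H hH using hd
  choose ψ hψ using hφ
  let H' : Matrix κ ι A := Matrix.of fun c i => ψ (H (c, i))
  have hprod : (G * H').map φ = (d : D) • (1 : Matrix ι ι D) := by
    ext i j
    apply IsFractionRing.injective D K
    have h1 : g (GK.row i) = Pi.single i 1 := by
      have := LinearMap.congr_fun hg (Pi.single i 1)
      simpa [Matrix.single_one_vecMul] using this
    have h2 : g (GK.row i) = ∑ c, GK i c • g (Pi.single c 1) := by
      conv_lhs => rw [pi_eq_sum_univ' (GK.row i)]
      simp [map_sum]
    have h3 : ∑ c, GK i c * g (Pi.single c 1) j = (Pi.single i 1 : ι → K) j := by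
      rw [← h1, h2]; simp
    have h4 : ∀ c, algebraMap D K (H (c, j)) = algebraMap D K d * g (Pi.single c 1) j := by
      intro c
      simpa [Algebra.smul_def] using hH (c, j)
    simp only [Matrix.map_apply, Matrix.mul_apply, map_sum, map_mul, H', Matrix.of_apply, hψ, h4]
    have h5 : ∀ c, algebraMap D K (φ (G i c)) * (algebraMap D K d * g (Pi.single c 1) j) =
        algebraMap D K d * (GK i c * g (Pi.single c 1) j) := by
      intro c; simp only [GK, Matrix.map_apply]; ring
    simp only [h5, ← Finset.mul_sum, h3]
    rw [Pi.single_apply, Matrix.smul_apply, Matrix.one_apply, smul_eq_mul, map_mul]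
    simp [eq_comm]
  have hdet : (G * H').det ≠ 0 := by
    intro h0
    have := congrArg φ h0
    rw [RingHom.map_det, RingHom.mapMatrix_apply, hprod, Matrix.det_smul] at this
    simp [nonZeroDivisors.coe_ne_zero] at this
  refine Matrix.eq_zero_of_vecMul_eq_zero hdet ?_
  rw [← Matrix.vecMul_vecMul, ha, Matrix.zero_vecMul]

/-! ### Teichmüller multiples and divisibility by `p` -/

open WittVector in
/-- Every Witt vector `x` is `[x₀] + V y` with `y` the shift of `x`. -/
lemma eq_teichmuller_add_verschiebung {p : ℕ} [Fact p.Prime] {R : Type*} [CommRing R]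
    (x : WittVector p R) : x = teichmuller p (x.coeff 0) + verschiebung (x.shift 1) := by
  ext n
  rw [coeff_add_of_disjoint]
  · cases n with
    | zero => simp
    | succ n => simp [teichmuller_coeff_pos, shift_coeff, add_comm]
  · intro n
    cases n with
    | zero => simp
    | succ n => simp [teichmuller_coeff_pos]

open WittVector in
lemma teichmuller_add_verschiebung_coeff_succ {p : ℕ} [Fact p.Prime] {R : Type*} [CommRing R]
    (r : R) (y : WittVector p R) (n : ℕ) :
    (teichmuller p r + verschiebung y).coeff (n + 1) = y.coeff n := by
  rw [coeff_add_of_disjoint]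
  · simp [teichmuller_coeff_pos]
  · intro n
    cases n with
    | zero => simp
    | succ n => simp [teichmuller_coeff_pos]

open WittVector in
lemma teichmuller_mul_coeff {p : ℕ} [Fact p.Prime] {R : Type*} [CommRing R] [CharP R p]
    (n : ℕ) (t : R) (x : WittVector p R) :
    (teichmuller p t * x).coeff n = t ^ p ^ n * x.coeff n := by
  induction n generalizing t x with
  | zero => simp [mul_coeff_zero]
  | succ n ih =>
    have hF : frobenius (teichmuller p t) = teichmuller p (t ^ p) := by
      rw [frobenius_eq_map_frobenius, map_teichmuller]; rfl
    have h : teichmuller p t * x =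
        teichmuller p (t * x.coeff 0) + verschiebung (teichmuller p (t ^ p) * x.shift 1) := by
      conv_lhs => rw [eq_teichmuller_add_verschiebung x]
      rw [mul_add, ← map_mul, mul_comm _ (verschiebung _), ← verschiebung_mul_frobenius, hF,
        mul_comm (x.shift 1)]
    rw [h, teichmuller_add_verschiebung_coeff_succ, ih, shift_coeff, ← pow_mul, ← pow_succ',
      add_comm 1 n]

open WittVector in
/-- `W(I) ⊆ [t] W(R)` when every element of `I` is divisible by all powers of `t`. -/
lemma teichmuller_dvd_of_coeff {p : ℕ} [Fact p.Prime] {R : Type*} [CommRing R] [CharP R p]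
    {t : R} {x : WittVector p R} (h : ∀ n, t ^ p ^ n ∣ x.coeff n) : teichmuller p t ∣ x := by
  choose y hy using h
  refine ⟨WittVector.mk p y, ?_⟩
  ext n
  rw [teichmuller_mul_coeff, hy, coeff_mk]

open WittVector in
/-- The first step of the Teichmüller expansion over a perfect ring. -/
lemma exists_eq_teichmuller_add {p : ℕ} [Fact p.Prime] {R : Type*} [CommRing R] [CharP R p]
    [PerfectRing R p] (x : WittVector p R) :
    ∃ y : WittVector p R, x = teichmuller p (x.coeff 0) + (p : WittVector p R) * y ∧
      ∀ n, y.coeff n ^ p = x.coeff (n + 1) := by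
  obtain ⟨y, hy⟩ := (frobenius_bijective p R).surjective (x.shift 1)
  refine ⟨y, ?_, fun n => ?_⟩
  · conv_lhs => rw [eq_teichmuller_add_verschiebung x, ← hy, verschiebung_frobenius, mul_comm]
  · rw [← coeff_frobenius_charP, hy, shift_coeff, add_comm]

open WittVector in
/-- For `t ≠ 0` the sequence `[t], p` is regular on a free module. -/
lemma exists_of_p_smul_eq {p : ℕ} [Fact p.Prime] {R : Type*} [CommRing R] [IsDomain R]
    [CharP R p] [PerfectRing R p] {M : Type*} [AddCommGroup M] [Module (WittVector p R) M]
    [Module.Finite (WittVector p R) M] [Module.Free (WittVector p R) M]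
    {t : R} (ht : t ≠ 0) {w z : M} (h : (p : WittVector p R) • w = teichmuller p t • z) :
    ∃ z', z = (p : WittVector p R) • z' ∧ w = teichmuller p t • z' := by
  let b := Module.Free.chooseBasis (WittVector p R) M
  have hp : (p : WittVector p R) ≠ 0 := p_nonzero p R
  have h1 : ∀ i, (p : WittVector p R) ∣ b.repr z i := by
    intro i
    have h2 : (p : WittVector p R) * b.repr w i = teichmuller p t * b.repr z i := by
      simpa using congrArg (fun m => b.repr m i) h
    rw [← Ideal.mem_span_singleton, mem_span_p_iff_coeff_zero_eq_zero]
    have h3 := congrArg (fun x => x.coeff 0) h2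
    simp only [mul_coeff_zero, coeff_p_zero, zero_mul, teichmuller_coeff_zero] at h3
    exact (mul_eq_zero.1 h3.symm).resolve_left ht
  choose c hc using h1
  have hz : z = (p : WittVector p R) • ∑ i, c i • b i := by
    conv_lhs => rw [← b.sum_repr z]
    simp [Finset.smul_sum, smul_smul, ← hc]
  refine ⟨_, hz, ?_⟩
  rw [hz, smul_comm] at h
  refine b.ext_elem fun i => mul_left_cancel₀ hp ?_
  simpa using congrArg (fun m => b.repr m i) h

/-! ### Relations among minimal generators -/

section Relations

open WittVector

/-- Minimality of the generating family together with saturation forces the coefficients of a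
relation to lie, modulo `p`, in `⋂ ϖ^k R`. -/
lemma relation_coeff_zero {p : ℕ} [Fact p.Prime] {R : Type*} [CommRing R] [IsDomain R]
    [ValuationRing R] [CharP R p] [PerfectRing R p] {M : Type*} [AddCommGroup M]
    [Module (WittVector p R) M]
    [Module.Finite (WittVector p R) M] [Module.Free (WittVector p R) M]
    {ϖ : R} (hϖ : ϖ ≠ 0) {ι : Type*} [Fintype ι] (v : ι → M)
    (hsat : ∀ (k : ℕ) (z : M), teichmuller p (ϖ ^ k) • z ∈
      Submodule.span (WittVector p R) (Set.range v) →
      z ∈ Submodule.span (WittVector p R) (Set.range v))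
    (hmin : ∀ (j : ι) (a : ι → WittVector p R), IsUnit (a j) → ∑ i, a i • v i ≠ 0)
    (a : ι → WittVector p R) (ha : ∑ i, a i • v i = 0) (i : ι) :
    (a i).coeff 0 ∈ infDvd ϖ := by
  classical
  rw [mem_infDvd]
  by_contra! hcon
  obtain ⟨k, hk⟩ := hcon
  -- a coefficient of least valuation
  obtain ⟨j, hj⟩ : ∃ j, ∀ l, (a j).coeff 0 ∣ (a l).coeff 0 := by
    have : ∀ s : Finset ι, s.Nonempty → ∃ j ∈ s, ∀ l ∈ s, (a j).coeff 0 ∣ (a l).coeff 0 := by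
      intro s hs
      induction hs using Finset.Nonempty.cons_induction with
      | singleton x => exact ⟨x, by simp⟩
      | cons x s hx hs ih =>
        obtain ⟨j, hjs, hj⟩ := ih
        rcases ValuationRing.dvd_total ((a x).coeff 0) ((a j).coeff 0) with h | h
        · refine ⟨x, by simp, fun l hl => ?_⟩
          rcases Finset.mem_cons.1 hl with rfl | hl
          · exact dvd_rfl
          · exact h.trans (hj l hl)
        · refine ⟨j, by simp [hjs], fun l hl => ?_⟩
          rcases Finset.mem_cons.1 hl with rfl | hl
          · exact h
          · exact hj l hl
    obtain ⟨j, -, hj⟩ := this Finset.univ ⟨i, Finset.mem_univ i⟩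
    exact ⟨j, fun l => hj l (Finset.mem_univ l)⟩
  have hne : (a j).coeff 0 ≠ 0 := by
    intro h0
    have := hj i
    rw [h0, zero_dvd_iff] at this
    exact hk (this ▸ dvd_zero _)
  obtain ⟨e, he⟩ := (ValuationRing.dvd_total (ϖ ^ k) ((a j).coeff 0)).resolve_left
    fun h => hk (h.trans (hj i))
  choose c hc using hj
  have hcj : c j = 1 := mul_left_cancel₀ hne (by rw [← hc, mul_one])
  choose a' ha' _ using fun i => exists_eq_teichmuller_add (a i)
  -- factor `[a_j mod p]` out of the relation modulo `p`; the cofactor has coefficient `1` at `j`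
  have h1 : teichmuller p ((a j).coeff 0) • ∑ l, teichmuller p (c l) • v l =
      -((p : WittVector p R) • ∑ l, a' l • v l) := by
    rw [eq_neg_iff_add_eq_zero, ← ha, Finset.smul_sum, Finset.smul_sum, ← Finset.sum_add_distrib]
    refine Finset.sum_congr rfl fun l _ => ?_
    rw [smul_smul, smul_smul, ← add_smul, ← map_mul, ← hc, ← ha']
  have h2 : (p : WittVector p R) • (-(teichmuller p e • ∑ l, a' l • v l)) =
      teichmuller p (ϖ ^ k) • ∑ l, teichmuller p (c l) • v l := by
    rw [he, mul_comm, map_mul, mul_smul, h1, smul_neg, smul_neg, smul_comm]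
  obtain ⟨z, hz, hz'⟩ := exists_of_p_smul_eq (pow_ne_zero k hϖ) h2
  have hzN : z ∈ Submodule.span (WittVector p R) (Set.range v) := by
    refine hsat k z ?_
    rw [← hz']
    exact neg_mem (Submodule.smul_mem _ _ (Submodule.sum_mem _ fun l _ =>
      Submodule.smul_mem _ _ (Submodule.subset_span ⟨l, rfl⟩)))
  obtain ⟨d, rfl⟩ := (Submodule.mem_span_range_iff_exists_fun _).1 hzN
  -- the coefficient at `j` is `1 - p d_j`, a unit because `W(R)` is `p`-adically complete
  refine hmin j (fun l => teichmuller p (c l) - p * d l) ?_ ?_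
  · have hjac := IsAdicComplete.le_jacobson_bot (Ideal.span {(p : WittVector p R)})
      (Ideal.mem_span_singleton_self _)
    have := Ideal.mem_jacobson_bot.1 hjac (-d j)
    simpa [hcj, sub_eq_add_neg, add_comm] using this
  · simp only [sub_smul, Finset.sum_sub_distrib, hz, Finset.smul_sum, smul_smul, sub_self]

/-- A combination of the generators that is divisible by all powers of `[ϖ]` in `M` has all its
coefficients in `W(⋂ ϖ^k R)`. -/
lemma coeff_mem_of_dvd {p : ℕ} [Fact p.Prime] {R : Type*} [CommRing R] [IsDomain R]
    [ValuationRing R] [CharP R p] [PerfectRing R p] {M : Type*} [AddCommGroup M]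
    [Module (WittVector p R) M]
    [Module.Finite (WittVector p R) M] [Module.Free (WittVector p R) M]
    {ϖ : R} (hϖ : ϖ ≠ 0) (hϖu : ¬ IsUnit ϖ) {ι : Type*} [Fintype ι] (v : ι → M)
    (hsat : ∀ (k : ℕ) (z : M), teichmuller p (ϖ ^ k) • z ∈
      Submodule.span (WittVector p R) (Set.range v) →
      z ∈ Submodule.span (WittVector p R) (Set.range v))
    (hmin : ∀ (j : ι) (a : ι → WittVector p R), IsUnit (a j) → ∑ i, a i • v i ≠ 0)
    (n : ℕ) (a : ι → WittVector p R)
    (ha : ∀ k : ℕ, ∃ z : M, ∑ i, a i • v i = teichmuller p (ϖ ^ k) • z) (i : ι) :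
    (a i).coeff n ∈ infDvd ϖ := by
  have := infDvd_isPrime hϖ hϖu
  have h0 : ∀ a : ι → WittVector p R,
      (∀ k : ℕ, ∃ z : M, ∑ i, a i • v i = teichmuller p (ϖ ^ k) • z) →
      ∀ i, (a i).coeff 0 ∈ infDvd ϖ := by
    intro a ha i
    rw [mem_infDvd]
    intro k
    obtain ⟨z, hz⟩ := ha k
    have hzN := hsat k z (hz ▸ Submodule.sum_mem _ fun l _ =>
      Submodule.smul_mem _ _ (Submodule.subset_span ⟨l, rfl⟩))
    obtain ⟨d, rfl⟩ := (Submodule.mem_span_range_iff_exists_fun _).1 hzN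
    have h1 := mem_infDvd.1 (relation_coeff_zero hϖ v hsat hmin
      (fun l => a l - teichmuller p (ϖ ^ k) * d l)
      (by simp only [sub_smul, Finset.sum_sub_distrib, hz, Finset.smul_sum, smul_smul, sub_self])
      i) k
    have h2 : (a i - teichmuller p (ϖ ^ k) * d i).coeff 0 =
        (a i).coeff 0 - ϖ ^ k * (d i).coeff 0 := by
      rw [← teichmuller_coeff_zero p (ϖ ^ k), ← mul_coeff_zero]
      exact map_sub (constantCoeff (p := p) (R := R)) (a i) (teichmuller p (ϖ ^ k) * d i)
    rw [h2] at h1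
    exact (dvd_sub_left (dvd_mul_right _ _)).1 h1
  induction n generalizing a i with
  | zero => exact h0 a ha i
  | succ n ih =>
    choose a' ha' hF using fun i => exists_eq_teichmuller_add (a i)
    have ha'k : ∀ k : ℕ, ∃ z : M, ∑ i, a' i • v i = teichmuller p (ϖ ^ k) • z := by
      intro k
      obtain ⟨z, hz⟩ := ha k
      have hr' : ∀ i, ∃ r, (a i).coeff 0 = ϖ ^ k * r := fun i => mem_infDvd.1 (h0 a ha i) k
      choose r hr using hr'
      have : (p : WittVector p R) • ∑ i, a' i • v i =
          teichmuller p (ϖ ^ k) • (z - ∑ i, teichmuller p (r i) • v i) := by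
        rw [smul_sub, ← hz, Finset.smul_sum, Finset.smul_sum, ← Finset.sum_sub_distrib]
        refine Finset.sum_congr rfl fun l _ => ?_
        have hl : a l = teichmuller p (ϖ ^ k) * teichmuller p (r l) + p * a' l := by
          rw [← map_mul (teichmuller p), ← hr]
          exact ha' l
        rw [hl, add_smul, mul_smul, mul_smul, add_sub_cancel_left]
      obtain ⟨z', -, h⟩ := exists_of_p_smul_eq (pow_ne_zero k hϖ) this
      exact ⟨z', h⟩
    rw [← hF]
    exact Ideal.pow_mem_of_mem _ (ih a' ha'k i) p (Fact.out : p.Prime).pos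

/-- A minimal generating family of a `[ϖ]`-saturated submodule is linearly independent. -/
lemma linearIndependent_of_minimal {p : ℕ} [Fact p.Prime] {R : Type*} [CommRing R] [IsDomain R]
    [ValuationRing R] [CharP R p] [PerfectRing R p] {M : Type*} [AddCommGroup M]
    [Module (WittVector p R) M]
    [Module.Finite (WittVector p R) M] [Module.Free (WittVector p R) M]
    {ϖ : R} (hϖ : ϖ ≠ 0) (hϖu : ¬ IsUnit ϖ) {ι : Type*} [Fintype ι] (v : ι → M)
    (hsat : ∀ (k : ℕ) (z : M), teichmuller p (ϖ ^ k) • z ∈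
      Submodule.span (WittVector p R) (Set.range v) →
      z ∈ Submodule.span (WittVector p R) (Set.range v))
    (hmin : ∀ (j : ι) (a : ι → WittVector p R), IsUnit (a j) → ∑ i, a i • v i ≠ 0) :
    LinearIndependent (WittVector p R) v := by
  have hprime := infDvd_isPrime hϖ hϖu
  let π := Ideal.Quotient.mk (infDvd ϖ)
  have : CharP (R ⧸ infDvd ϖ) p := by
    have : (p : R ⧸ infDvd ϖ) = 0 := by
      rw [← map_natCast π, CharP.cast_eq_zero, map_zero]
    exact (CharP.charP_iff_prime_eq_zero Fact.out).2 this
  let φ : WittVector p R →+* WittVector p (R ⧸ infDvd ϖ) := WittVector.map π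
  have hφ : Function.Surjective φ := WittVector.map_surjective π Ideal.Quotient.mk_surjective
  have hφ0 : ∀ x, φ x = 0 ↔ ∀ n, x.coeff n ∈ infDvd ϖ := by
    intro x
    simp only [WittVector.ext_iff, φ, WittVector.map_coeff, zero_coeff, π,
      Ideal.Quotient.eq_zero_iff_mem]
  let b := Module.Free.chooseBasis (WittVector p R) M
  let G : Matrix ι _ (WittVector p R) := Matrix.of fun i c => b.repr (v i) c
  have hG : ∀ (a : ι → WittVector p R) c, Matrix.vecMul a G c = b.repr (∑ i, a i • v i) c := by
    intro a c
    simp [Matrix.vecMul, dotProduct, G]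
  rw [Fintype.linearIndependent_iff]
  intro a ha
  refine congrFun (vecMul_injective_of_map φ hφ G ?_ a ?_)
  · intro d hd
    choose e he using fun i => hφ (d i)
    have hdvd : ∀ (k : ℕ) c, teichmuller p (ϖ ^ k) ∣ b.repr (∑ i, e i • v i) c := by
      intro k c
      have h1 : φ (b.repr (∑ i, e i • v i) c) = 0 := by
        rw [← hG]
        refine Eq.trans ?_ (congrFun hd c)
        simp [Matrix.vecMul, dotProduct, he]
      refine teichmuller_dvd_of_coeff fun n => ?_
      rw [← pow_mul]
      exact mem_infDvd.1 ((hφ0 _).1 h1 n) _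
    ext1 i
    rw [← he, Pi.zero_apply, hφ0]
    intro n
    refine coeff_mem_of_dvd hϖ hϖu v hsat hmin n e (fun k => ?_) i
    choose c hc using hdvd k
    refine ⟨∑ i, c i • b i, ?_⟩
    rw [← b.sum_repr (∑ i, e i • v i)]
    simp only [Finset.smul_sum, smul_smul, ← hc]
  · ext1 c
    rw [hG, ha]
    simp

end Relations

/-! ### Minimal generators and conclusion -/

/-- A finitely generated submodule has a finite generating family in which no relation has a unit
coefficient. -/
lemma exists_minimal_generators {A M : Type*} [CommRing A] [AddCommGroup M] [Module A M]
    {N : Submodule A M} (hN : N.FG) :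
    ∃ (m : ℕ) (v : Fin m → M), Submodule.span A (Set.range v) = N ∧
      ∀ (j : Fin m) (a : Fin m → A), IsUnit (a j) → ∑ i, a i • v i ≠ 0 := by
  classical
  have hex := Submodule.fg_iff_exists_fin_generating_family.1 hN
  obtain ⟨v, hv⟩ := Nat.find_spec hex
  refine ⟨Nat.find hex, v, hv, fun j a hj h0 => ?_⟩
  generalize hm : Nat.find hex = m at v j a
  cases m with
  | zero => exact j.elim0
  | succ m =>
    refine Nat.find_min hex (m := m) (by omega) ⟨fun i => v (j.succAbove i), ?_⟩
    have hrange : Set.range v = insert (v j) (Set.range fun i => v (j.succAbove i)) := by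
      ext x
      constructor
      · rintro ⟨i, rfl⟩
        rcases Fin.eq_self_or_eq_succAbove j i with rfl | ⟨i, rfl⟩
        · exact Set.mem_insert _ _
        · exact Set.mem_insert_of_mem _ ⟨i, rfl⟩
      · rintro (rfl | ⟨i, rfl⟩)
        · exact ⟨_, rfl⟩
        · exact ⟨_, rfl⟩
    rw [← hv, hrange, Submodule.span_insert_eq_span]
    rw [Fin.sum_univ_succAbove _ j] at h0
    obtain ⟨c, hc⟩ := hj.exists_left_inv
    have h1 : v j = -(c • ∑ i, a (j.succAbove i) • v (j.succAbove i)) := by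
      rw [eq_neg_iff_add_eq_zero, ← smul_zero c, ← h0, smul_add, smul_smul, hc, one_smul]
    rw [h1]
    exact neg_mem (Submodule.smul_mem _ _ (Submodule.sum_mem _ fun i _ =>
      Submodule.smul_mem _ _ (Submodule.subset_span ⟨i, rfl⟩)))


/-!
Context: `R = lim O_{K̄}/(p)` is a perfect valuation ring (a domain) of characteristic
`p` with fraction field `F = Frac R`; `A_inf = W(R)`.  The compatible system
`(π_n mod p)_n` defines a nonzero nonunit `π̲₀ ∈ R`, with Teichmüller lift
`u = [π̲₀] ∈ A_inf`.
-/

variable (p : ℕ) [Fact p.Prime] (R : Type*) [CommRing R] [IsDomain R]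
  [ValuationRing R] [CharP R p] [PerfectRing R p]

/-- **Statement 19** (Lemma 5.10).  Let `f : M → M'` be an `A_inf`-linear map with `M`
finite free, `M'` `u`-torsion-free (multiplication by `u = [π̲₀]` injective), and
`N = ker f` finitely generated.  Then `N = ker f` is a finite free `A_inf`-module. -/
theorem statement19 (ϖ : R) (hϖ : ϖ ≠ 0) (hϖu : ¬IsUnit ϖ)
    (M M' : Type*) [AddCommGroup M] [Module (WittVector p R) M]
    [AddCommGroup M'] [Module (WittVector p R) M']
    [Module.Finite (WittVector p R) M] [Module.Free (WittVector p R) M]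
    (f : M →ₗ[WittVector p R] M')
    (hM' : Function.Injective (fun m : M' => WittVector.teichmuller p ϖ • m))
    (hN : (LinearMap.ker f).FG) :
    Module.Finite (WittVector p R) (LinearMap.ker f) ∧
      Module.Free (WittVector p R) (LinearMap.ker f) := by
  obtain ⟨m, v, hv, hmin⟩ := exists_minimal_generators hN
  have hsat : ∀ (k : ℕ) (z : M), WittVector.teichmuller p (ϖ ^ k) • z ∈ LinearMap.ker f →
      z ∈ LinearMap.ker f := by
    intro k z hz
    rw [LinearMap.mem_ker, map_smul, map_pow] at hz
    rw [LinearMap.mem_ker]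
    induction k with
    | zero => simpa using hz
    | succ k ih =>
      rw [pow_succ', mul_smul] at hz
      exact ih (hM' (hz.trans (smul_zero _).symm))
  have hli := linearIndependent_of_minimal hϖ hϖu v (by rwa [hv]) hmin
  refine ⟨Module.Finite.iff_fg.2 hN, ?_⟩
  rw [← hv]
  exact Module.Free.of_basis (Module.Basis.span hli)
end
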